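/- arXiv:math/9904026 — 2 statements merged into one kernel-verified Lean document; each statement's English description precedes it below -/
import Mathlib

section
/- Let A₁, A₂ : ℝ² → M_m(ℝ) be continuously differentiable and satisfy the zero-curvature (flatness) condition ∂A₁/∂x₂ − ∂A₂/∂x₁ + [A₁, A₂] = 0 at every point of ℝ². Then the flat connection integrates globally: there exists a differentiable map g : ℝ² → M_m(ℝ) such that g(0,0) = 1, g(x) is invertible for every x ∈ ℝ², and ∂g/∂x₁ = A₁·g and ∂g/∂x₂ = A₂·g at every point of ℝ². -/
attribute [local instance] Matrix.normedAddCommGroup Matrix.normedSpace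

open Set Filter Topology

noncomputable def picIter {E : Type*} [NormedAddCommGroup E] [NormedSpace ℝ E]
    (M : ℝ → E →L[ℝ] E) (v : E) : ℕ → ℝ → E
  | 0 => fun _ => v
  | n + 1 => fun t => ∫ s in (0 : ℝ)..t, M s (picIter M v n s)

theorem picIter_cont {E : Type*} [NormedAddCommGroup E] [NormedSpace ℝ E] [CompleteSpace E]
    (M : ℝ → E →L[ℝ] E) (hM : Continuous M) (v : E) (n : ℕ) : Continuous (picIter M v n) := by
  induction n with
  | zero => exact continuous_const
  | succ n ih =>
    have h : Continuous fun s => M s (picIter M v n s) := hM.clm_apply ih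
    exact continuous_iff_continuousAt.2 fun t =>
      (h.integral_hasStrictDerivAt 0 t).hasDerivAt.continuousAt

theorem picIter_deriv {E : Type*} [NormedAddCommGroup E] [NormedSpace ℝ E] [CompleteSpace E]
    (M : ℝ → E →L[ℝ] E) (hM : Continuous M) (v : E) (n : ℕ) (t : ℝ) :
    HasDerivAt (picIter M v (n + 1)) (M t (picIter M v n t)) t := by
  have h : Continuous fun s => M s (picIter M v n s) := hM.clm_apply (picIter_cont M hM v n)
  exact (h.integral_hasStrictDerivAt 0 t).hasDerivAt

theorem picIter_bound {E : Type*} [NormedAddCommGroup E] [NormedSpace ℝ E] [CompleteSpace E]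
    (M : ℝ → E →L[ℝ] E) (hM : Continuous M) (v : E) (K : ℝ)
    (hK : ∀ t ∈ Ioo (-1 : ℝ) 2, ‖M t‖ ≤ K) (n : ℕ) :
    ∀ t ∈ Ioo (-1 : ℝ) 2, ‖picIter M v n t‖ ≤ K ^ n * |t| ^ n / n.factorial * ‖v‖ := by
  have hK0 : 0 ≤ K := (norm_nonneg _).trans (hK 0 (by norm_num))
  induction n with
  | zero => intro t _; simp [picIter]
  | succ n ih =>
    intro t ht
    have h : Continuous fun s => M s (picIter M v n s) := hM.clm_apply (picIter_cont M hM v n)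
    have key : ∀ s ∈ uIoc 0 t, ‖M s (picIter M v n s)‖
        ≤ (K ^ (n+1) / n.factorial * ‖v‖) * |s - 0| ^ n := by
      intro s hs
      have hs' : s ∈ Ioo (-1 : ℝ) 2 := by
        rcases mem_uIoc.1 hs with h | h <;> constructor <;> linarith [ht.1, ht.2, h.1, h.2]
      calc _ ≤ ‖M s‖ * ‖picIter M v n s‖ := (M s).le_opNorm _
        _ ≤ K * (K ^ n * |s| ^ n / n.factorial * ‖v‖) := by
          gcongr
          · exact hK s hs'
          · exact ih s hs'
        _ = _ := by rw [sub_zero]; ring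
    calc ‖picIter M v (n+1) t‖ ≤ ∫ s in uIoc 0 t, ‖M s (picIter M v n s)‖ :=
          intervalIntegral.norm_integral_le_integral_norm_uIoc
      _ ≤ ∫ s in uIoc 0 t, (K ^ (n+1) / n.factorial * ‖v‖) * |s - 0| ^ n := by
          apply MeasureTheory.setIntegral_mono_on
          · exact (h.norm.intervalIntegrable 0 t).def'
          · exact ((by fun_prop : Continuous fun s : ℝ =>
              (K ^ (n+1) / n.factorial * ‖v‖) * |s - 0| ^ n).intervalIntegrable 0 t).def'
          · exact measurableSet_uIoc
          · exact key
      _ = _ := by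
          rw [MeasureTheory.integral_const_mul, integral_pow_abs_sub_uIoc, Nat.factorial_succ]
          push_cast
          field_simp
          simp

theorem linODE {E : Type*} [NormedAddCommGroup E] [NormedSpace ℝ E] [CompleteSpace E]
    (M : ℝ → E →L[ℝ] E) (hM : Continuous M) (v : E) :
    ∃ c : ℝ → E, c 0 = v ∧ ∀ t ∈ Ioo (-1 : ℝ) 2, HasDerivAt c (M t (c t)) t := by
  obtain ⟨K, hK⟩ := (isCompact_Icc (a := (-1 : ℝ)) (b := 2)).exists_bound_of_continuousOn
    hM.continuousOn
  have hK' : ∀ t ∈ Ioo (-1 : ℝ) 2, ‖M t‖ ≤ K := fun t ht => hK t (Ioo_subset_Icc_self ht)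
  have hK0 : 0 ≤ K := (norm_nonneg _).trans (hK' 0 (by norm_num))
  have hb : ∀ n, ∀ t ∈ Ioo (-1 : ℝ) 2,
      ‖picIter M v n t‖ ≤ (K * 2) ^ n / n.factorial * ‖v‖ := by
    intro n t ht
    refine (picIter_bound M hM v K hK' n t ht).trans ?_
    rw [mul_pow]
    have : |t| ≤ 2 := abs_le.2 ⟨by linarith [ht.1], ht.2.le⟩
    gcongr
  have hs : Summable fun n : ℕ => (K * 2) ^ n / n.factorial * ‖v‖ :=
    (Real.summable_pow_div_factorial _).mul_right _
  have hsum : ∀ t ∈ Ioo (-1 : ℝ) 2, Summable fun n => picIter M v n t := fun t ht =>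
    Summable.of_norm_bounded hs fun n => hb n t ht
  refine ⟨fun t => v + ∑' n, picIter M v (n + 1) t, ?_, ?_⟩
  · simp [picIter]
  · intro t ht
    have h1 := hasDerivAt_tsum_of_isPreconnected (𝕜 := ℝ) (g := fun n => picIter M v (n + 1))
      (g' := fun n t => M t (picIter M v n t)) (t := Ioo (-1 : ℝ) 2) (y₀ := 0) (y := t)
      (hs.mul_left K) isOpen_Ioo isPreconnected_Ioo
      (fun n y _ => picIter_deriv M hM v n y)
      (fun n y hy => ((M y).le_opNorm _).trans
        (mul_le_mul (hK' y hy) (hb n y hy) (norm_nonneg _) hK0))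
      (by norm_num) ((summable_nat_add_iff 1).2 (hsum 0 (by norm_num))) ht
    have h2 : M t (v + ∑' n, picIter M v (n + 1) t) = ∑' n, M t (picIter M v n t) := by
      rw [← (M t).map_tsum (hsum t ht), (hsum t ht).tsum_eq_zero_add]
      rfl
    rw [h2]
    exact h1.const_add v

theorem unif_small {X F : Type*} [NormedAddCommGroup X] [NormedAddCommGroup F]
    (G : ℝ × X → F) (hG : Continuous G) (p : X) (ε : ℝ) (hε : 0 < ε) :
    ∀ᶠ q in 𝓝 p, ∀ t ∈ Icc (0 : ℝ) 1, ‖G (t, q) - G (t, p)‖ < ε := by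
  apply isCompact_Icc.eventually_forall_of_forall_eventually
  intro t _
  have hc : Continuous fun z : X × ℝ => ‖G (z.2, z.1) - G (z.2, p)‖ := by fun_prop
  exact hc.continuousAt.eventually_lt continuousAt_const (by simpa using hε)

theorem flat_integrate {X E : Type*} [NormedAddCommGroup X] [NormedSpace ℝ X]
    [NormedAddCommGroup E] [NormedSpace ℝ E] [CompleteSpace E]
    (B : X → X →L[ℝ] (E →L[ℝ] E)) (hB : ContDiff ℝ 1 B)
    (hflat : ∀ p h k : X, ∀ e : E, fderiv ℝ B p h k e + B p k (B p h e)
      = fderiv ℝ B p k h e + B p h (B p k e)) (v : E) :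
    ∃ u : X → E, u 0 = v ∧ ∀ p, HasFDerivAt u ((B p).flip (u p)) p := by
  have hBc : Continuous B := hB.continuous
  have hDc : Continuous (fderiv ℝ B) := hB.continuous_fderiv (by norm_num)
  have hBd : ∀ p, HasFDerivAt B (fderiv ℝ B p) p :=
    fun p => (hB.differentiable (by norm_num) p).hasFDerivAt
  have hode : ∀ p : X, ∃ c : ℝ → E, c 0 = v ∧
      ∀ t ∈ Ioo (-1 : ℝ) 2, HasDerivAt c (B (t • p) p (c t)) t := by
    intro p
    exact linODE (fun t => B (t • p) p) (by fun_prop) v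
  choose c hc0 hc using hode
  refine ⟨fun p => c p 1, ?_, ?_⟩
  · have : ∀ t ∈ Icc (0:ℝ) 1, c 0 t = c 0 0 := by
      apply constant_of_has_deriv_right_zero
      · intro t ht
        exact (hc 0 t ⟨by linarith [ht.1], by linarith [ht.2]⟩).continuousAt.continuousWithinAt
      · intro t ht
        have := hc 0 t ⟨by linarith [ht.1], by linarith [ht.2]⟩
        simpa using this.hasDerivWithinAt (s := Ici t)
    simp only [this 1 (by norm_num), hc0]
  intro p
  have hIcc : ∀ t ∈ Icc (0:ℝ) 1, t ∈ Ioo (-1:ℝ) 2 := fun t ht =>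
    ⟨by linarith [ht.1], by linarith [ht.2]⟩
  -- bounds
  obtain ⟨C, hC⟩ := (isCompact_Icc (a := (0 : ℝ)) (b := 1)).exists_bound_of_continuousOn
    (f := c p) (fun t ht => (hc p t (hIcc t ht)).continuousAt.continuousWithinAt)
  obtain ⟨C', hC'⟩ := (isCompact_Icc (a := (0 : ℝ)) (b := 1)).exists_bound_of_continuousOn
    (f := fun t : ℝ => B (t • p)) (by fun_prop)
  obtain ⟨K₀, hK₀⟩ := (isCompact_Icc (a := (0 : ℝ)) (b := 1)).exists_bound_of_continuousOn
    (f := fun t : ℝ => B (t • p) p) (by fun_prop)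
  have hC0 : 0 ≤ C := (norm_nonneg _).trans (hC 0 (by norm_num))
  have hC'0 : 0 ≤ C' := (norm_nonneg _).trans (hC' 0 (by norm_num))
  have hK₀0 : 0 ≤ K₀ := (norm_nonneg _).trans (hK₀ 0 (by norm_num))
  set K := K₀ + 1 with hKdef
  have hK0 : 0 < K := by positivity
  let Dφ : ℝ × X → X →L[ℝ] (E →L[ℝ] E) := fun z =>
    B (z.1 • z.2) + z.1 • (fderiv ℝ B (z.1 • z.2)).flip z.2
  have hDφc : Continuous Dφ := by
    have : Continuous fun z : ℝ × X => (fderiv ℝ B (z.1 • z.2)).flip :=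
      (ContinuousLinearMap.flipₗᵢ ℝ X X (E →L[ℝ] E)).continuous.comp
        (hDc.comp (by fun_prop))
    have h2 : Continuous fun z : ℝ × X => (fderiv ℝ B (z.1 • z.2)).flip z.2 :=
      this.clm_apply continuous_snd
    exact (hBc.comp (by fun_prop)).add (continuous_fst.smul h2)
  have hφd : ∀ t z, HasFDerivAt (fun z => B (t • z) z) (Dφ (t, z)) z := by
    intro t z
    have h1 : HasFDerivAt (fun z : X => B (t • z))
        ((fderiv ℝ B (t • z)).comp (t • ContinuousLinearMap.id ℝ X)) z :=
      HasFDerivAt.comp (g := B) z (hBd (t • z)) (t • ContinuousLinearMap.id ℝ X).hasFDerivAt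
    have h2 := h1.clm_apply (hasFDerivAt_id z)
    refine HasFDerivAt.congr_fderiv (f := fun z => B (t • z) z) h2 ?_
    ext h e
    simp [Dφ]
  have hφc : Continuous fun z : ℝ × X => B (z.1 • z.2) z.2 := by fun_prop
  rw [hasFDerivAt_iff_isLittleO, Asymptotics.isLittleO_iff]
  intro η hη
  set R := (C + C' * C) / K * (Real.exp K - 1) with hR
  have hR0 : 0 ≤ R := by
    have : 0 ≤ Real.exp K - 1 := by linarith [Real.add_one_le_exp K]
    positivity
  obtain ⟨ε, hε, hε1, hεR⟩ : ∃ ε : ℝ, 0 < ε ∧ ε ≤ 1 ∧ ε * R ≤ η := by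
    refine ⟨min 1 (η / (R + 1)), by positivity, min_le_left _ _, ?_⟩
    calc min 1 (η / (R + 1)) * R ≤ η / (R + 1) * (R + 1) := by
          gcongr
          · exact min_le_right _ _
          · linarith
      _ = η := by field_simp
  have e1 := unif_small _ hφc p ε hε
  have e2 := unif_small (F := X →L[ℝ] (E →L[ℝ] E)) Dφ hDφc p ε hε
  obtain ⟨δ, hδ, hball⟩ := Metric.eventually_nhds_iff_ball.1 e2
  filter_upwards [e1, Metric.ball_mem_nhds p hδ] with q hq1 hqball
  set h := q - p with hh
  have hmvt : ∀ t ∈ Icc (0:ℝ) 1, ‖B (t • q) q - B (t • p) p - Dφ (t, p) h‖ ≤ ε * ‖h‖ := by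
    intro t ht
    exact (convex_ball p δ).norm_image_sub_le_of_norm_hasFDerivWithin_le'
      (fun z _ => (hφd t z).hasFDerivWithinAt) (fun z hz => (hball z hz t ht).le)
      (Metric.mem_ball_self hδ) hqball
  let w : ℝ → E := fun t => c q t - c p t - t • B (t • p) h (c p t)
  let w' : ℝ → E := fun t => B (t • q) q (c q t) - B (t • p) p (c p t)
    - (t • (fderiv ℝ B (t • p) p h (c p t) + B (t • p) h (B (t • p) p (c p t)))
      + B (t • p) h (c p t))
  have hw : ∀ t ∈ Icc (0:ℝ) 1, HasDerivAt w (w' t) t := by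
    intro t ht
    have ht' := hIcc t ht
    have a1 : HasDerivAt (fun t : ℝ => B (t • p)) (fderiv ℝ B (t • p) p) t := by
      have : HasDerivAt (fun t : ℝ => t • p) p t := by
        simpa using (hasDerivAt_id t).smul_const p
      exact HasFDerivAt.comp_hasDerivAt (l := B) t (hBd (t • p)) this
    have a2 : HasDerivAt (fun t : ℝ => B (t • p) h) (fderiv ℝ B (t • p) p h) t := by
      simpa using a1.clm_apply (hasDerivAt_const t h)
    have a3 := (hasDerivAt_id t).smul (a2.clm_apply (hc p t ht'))
    have a4 := ((hc q t ht').sub (hc p t ht')).sub a3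
    refine a4.congr_deriv ?_
    simp [w']
  have hw0 : w 0 = 0 := by simp [w, hc0]
  have hbd : ∀ t ∈ Ico (0:ℝ) 1, ‖w' t‖ ≤ K * ‖w t‖ + ε * ‖h‖ * (C + C' * C) := by
    intro t ht0
    have ht : t ∈ Icc (0:ℝ) 1 := Ico_subset_Icc_self ht0
    have hid : w' t = B (t • q) q (w t)
        + ((B (t • q) q - B (t • p) p - Dφ (t, p) h) (c p t)
        + t • (B (t • q) q - B (t • p) p) (B (t • p) h (c p t))) := by
      have hf := hflat (t • p) p h (c p t)
      simp only [w', w, Dφ]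
      rw [hf]
      simp
      module
    rw [hid]
    have b1 : ‖B (t • q) q‖ ≤ K := by
      have := norm_le_norm_add_norm_sub' (B (t • q) q) (B (t • p) p)
      have h2 := hq1 t ht
      have h3 := hK₀ t ht
      linarith
    have b2 : ‖(B (t • q) q - B (t • p) p - Dφ (t, p) h) (c p t)‖ ≤ ε * ‖h‖ * C :=
      (ContinuousLinearMap.le_opNorm _ _).trans
        (mul_le_mul (hmvt t ht) (hC t ht) (norm_nonneg _) (by positivity))
    have b3 : ‖t • (B (t • q) q - B (t • p) p) (B (t • p) h (c p t))‖
        ≤ 1 * (ε * (C' * ‖h‖ * C)) := by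
      rw [norm_smul]
      refine mul_le_mul ?_ ?_ (norm_nonneg _) zero_le_one
      · rw [Real.norm_eq_abs, abs_of_nonneg ht.1]; exact ht.2
      refine (ContinuousLinearMap.le_opNorm _ _).trans
        (mul_le_mul (hq1 t ht).le ?_ (norm_nonneg _) hε.le)
      refine (ContinuousLinearMap.le_opNorm _ _).trans
        (mul_le_mul ?_ (hC t ht) (norm_nonneg _) (by positivity))
      exact (ContinuousLinearMap.le_opNorm _ _).trans
        (mul_le_mul_of_nonneg_right (hC' t ht) (norm_nonneg _))
    have b4 : ‖B (t • q) q (w t)‖ ≤ K * ‖w t‖ :=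
      (ContinuousLinearMap.le_opNorm _ _).trans
        (mul_le_mul_of_nonneg_right b1 (norm_nonneg _))
    refine (norm_add_le _ _).trans ?_
    have := norm_add_le ((B (t • q) q - B (t • p) p - Dφ (t, p) h) (c p t))
      (t • (B (t • q) q - B (t • p) p) (B (t • p) h (c p t)))
    linarith
  have hgr := norm_le_gronwallBound_of_norm_deriv_right_le (f := w) (f' := w') (δ := 0) (K := K)
    (ε := ε * ‖h‖ * (C + C' * C)) (a := 0) (b := 1)
    (fun t ht => (hw t ht).continuousAt.continuousWithinAt)
    (fun t ht => (hw t (Ico_subset_Icc_self ht)).hasDerivWithinAt) (by simp [hw0]) hbd 1 (by norm_num)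
  rw [gronwallBound_of_K_ne_0 hK0.ne'] at hgr
  have hfin : w 1 = c q 1 - c p 1 - (B p).flip (c p 1) h := by simp [w]
  rw [hfin] at hgr
  refine hgr.trans ?_
  have : 0 * Real.exp (K * (1 - 0)) + ε * ‖h‖ * (C + C' * C) / K * (Real.exp (K * (1 - 0)) - 1)
      = ε * R * ‖h‖ := by
    rw [hR]; simp; ring
  refine this.le.trans ?_
  exact mul_le_mul_of_nonneg_right hεR (norm_nonneg _)

theorem clm_c1 {X F G : Type*} [NormedAddCommGroup X] [NormedSpace ℝ X]
    [NormedAddCommGroup F] [NormedSpace ℝ F] [NormedAddCommGroup G] [NormedSpace ℝ G]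
    (T : F →L[ℝ] G) (A : X → F) (hA : ContDiff ℝ 1 A) : ContDiff ℝ 1 fun p => T (A p) :=
  T.contDiff.comp hA

theorem clm_fd {X F G : Type*} [NormedAddCommGroup X] [NormedSpace ℝ X]
    [NormedAddCommGroup F] [NormedSpace ℝ F] [NormedAddCommGroup G] [NormedSpace ℝ G]
    (T : F →L[ℝ] G) (A : X → F) (hA : ContDiff ℝ 1 A) (p : X) :
    HasFDerivAt (fun p => T (A p)) (T.comp (fderiv ℝ A p)) p :=
  T.hasFDerivAt.comp p (hA.differentiable (by norm_num) p).hasFDerivAt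

theorem clm_c1_add {X F G : Type*} [NormedAddCommGroup X] [NormedSpace ℝ X]
    [NormedAddCommGroup F] [NormedSpace ℝ F] [NormedAddCommGroup G] [NormedSpace ℝ G]
    (S T : F →L[ℝ] G) (A B : X → F) (hA : ContDiff ℝ 1 A) (hB : ContDiff ℝ 1 B) :
    ContDiff ℝ 1 fun p => S (A p) + T (B p) :=
  (clm_c1 S A hA).add (clm_c1 T B hB)

/-- Flat pair version on `ℝ²`. -/
theorem flat_pair {E : Type*} [NormedAddCommGroup E] [NormedSpace ℝ E] [CompleteSpace E]
    (B₁ B₂ : ℝ × ℝ → E →L[ℝ] E) (h₁ : ContDiff ℝ 1 B₁) (h₂ : ContDiff ℝ 1 B₂)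
    (hflat : ∀ p e, fderiv ℝ B₁ p (0, 1) e - fderiv ℝ B₂ p (1, 0) e
      + (B₁ p (B₂ p e) - B₂ p (B₁ p e)) = 0) (v : E) :
    ∃ u : ℝ × ℝ → E, u (0, 0) = v ∧ ∀ p, ∃ u' : ℝ × ℝ →L[ℝ] E, HasFDerivAt u u' p ∧
      u' (1, 0) = B₁ p (u p) ∧ u' (0, 1) = B₂ p (u p) := by
  obtain ⟨S₁, hS₁⟩ : ∃ S : (E →L[ℝ] E) →L[ℝ] (ℝ × ℝ →L[ℝ] (E →L[ℝ] E)),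
      ∀ a z, S a z = z.1 • a :=
    ⟨ContinuousLinearMap.smulRightL ℝ (ℝ × ℝ) (E →L[ℝ] E) (ContinuousLinearMap.fst ℝ ℝ ℝ),
      fun a z => by simp⟩
  obtain ⟨S₂, hS₂⟩ : ∃ S : (E →L[ℝ] E) →L[ℝ] (ℝ × ℝ →L[ℝ] (E →L[ℝ] E)),
      ∀ a z, S a z = z.2 • a :=
    ⟨ContinuousLinearMap.smulRightL ℝ (ℝ × ℝ) (E →L[ℝ] E) (ContinuousLinearMap.snd ℝ ℝ ℝ),
      fun a z => by simp⟩
  let B : ℝ × ℝ → ℝ × ℝ →L[ℝ] (E →L[ℝ] E) := fun p => S₁ (B₁ p) + S₂ (B₂ p)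
  have hB : ContDiff ℝ 1 B := clm_c1_add (F := E →L[ℝ] E)
    (G := ℝ × ℝ →L[ℝ] (E →L[ℝ] E)) S₁ S₂ B₁ B₂ h₁ h₂
  have hBd : ∀ p, fderiv ℝ B p = S₁.comp (fderiv ℝ B₁ p) + S₂.comp (fderiv ℝ B₂ p) := by
    intro p
    apply HasFDerivAt.fderiv
    have d1 :=
      clm_fd (F := E →L[ℝ] E) (G := ℝ × ℝ →L[ℝ] (E →L[ℝ] E)) S₁ B₁ h₁ p
    have d2 :=
      clm_fd (F := E →L[ℝ] E) (G := ℝ × ℝ →L[ℝ] (E →L[ℝ] E)) S₂ B₂ h₂ p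
    exact d1.add d2
  obtain ⟨u, hu0, hu⟩ := flat_integrate B hB (by
    intro p h k e
    have hs : ∀ (L : ℝ × ℝ →L[ℝ] (E →L[ℝ] E)) (z : ℝ × ℝ),
        L z e = z.1 • L (1, 0) e + z.2 • L (0, 1) e := by
      intro L z
      have : z = z.1 • ((1:ℝ), (0:ℝ)) + z.2 • ((0:ℝ), (1:ℝ)) := by ext <;> simp
      conv_lhs => rw [this]
      simp only [map_add, map_smul]
      rfl
    rw [hBd]
    simp only [B, add_apply, ContinuousLinearMap.comp_apply,
      hS₁, hS₂, smul_apply, map_add, map_smul]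
    rw [hs _ h, hs _ k, hs (fderiv ℝ B₂ p) h, hs (fderiv ℝ B₂ p) k]
    have hf : fderiv ℝ B₁ p (0, 1) e = fderiv ℝ B₂ p (1, 0) e
      - (B₁ p (B₂ p e) - B₂ p (B₁ p e)) := by
      rw [← sub_eq_zero, ← hflat p e]; abel
    rw [hf]
    module) v
  refine ⟨u, hu0, fun p => ⟨_, hu p, ?_, ?_⟩⟩ <;> simp [B, hS₁, hS₂]

/-- Version in an abstract finite-dimensional associative unital algebra. -/
theorem flat_alg {E : Type*} [NormedAddCommGroup E] [NormedSpace ℝ E] [FiniteDimensional ℝ E]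
    (mul : E →ₗ[ℝ] E →ₗ[ℝ] E) (one : E) (hone : mul one one = one)
    (hassoc : ∀ a b c, mul (mul a b) c = mul a (mul b c))
    (A₁ A₂ : ℝ × ℝ → E) (hA₁ : ContDiff ℝ 1 A₁) (hA₂ : ContDiff ℝ 1 A₂)
    (hflat : ∀ p : ℝ × ℝ, fderiv ℝ A₁ p (0, 1) - fderiv ℝ A₂ p (1, 0)
      + (mul (A₁ p) (A₂ p) - mul (A₂ p) (A₁ p)) = 0) :
    ∃ g k : ℝ × ℝ → E,
      Differentiable ℝ g ∧ g (0, 0) = one ∧ (∀ p : ℝ × ℝ, mul (k p) (g p) = one) ∧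
        ∀ p : ℝ × ℝ,
          fderiv ℝ g p (1, 0) = mul (A₁ p) (g p) ∧ fderiv ℝ g p (0, 1) = mul (A₂ p) (g p) := by
  have : CompleteSpace E := FiniteDimensional.complete ℝ _
  let L : E →L[ℝ] E →L[ℝ] E :=
    LinearMap.toContinuousLinearMap
      ((LinearMap.toContinuousLinearMap (𝕜 := ℝ) (E := E) (F' := E)).toLinearMap ∘ₗ mul)
  have hL : ∀ a b, L a b = mul a b := fun a b => rfl
  have hdL : ∀ A : ℝ × ℝ → E, ContDiff ℝ 1 A → ∀ (T : E →L[ℝ] E →L[ℝ] E) p,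
      fderiv ℝ (fun p => T (A p)) p = T.comp (fderiv ℝ A p) := by
    intro A hA T p
    exact (clm_fd T A hA p).fderiv
  obtain ⟨g, hg0, hg⟩ := flat_pair (fun p => L (A₁ p)) (fun p => L (A₂ p))
    (clm_c1 L A₁ hA₁) (clm_c1 L A₂ hA₂) (by
      intro p e
      rw [hdL A₁ hA₁, hdL A₂ hA₂]
      simp only [ContinuousLinearMap.comp_apply, hL]
      rw [← hassoc, ← hassoc]
      simpa using congrArg (fun z => mul z e) (hflat p)) one
  let T : E →L[ℝ] E →L[ℝ] E := -L.flip
  have hT : ∀ a b, T a b = -(mul b a) := fun a b => rfl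
  obtain ⟨k, hk0, hk⟩ := flat_pair (fun p => T (A₁ p)) (fun p => T (A₂ p))
    (clm_c1 T A₁ hA₁) (clm_c1 T A₂ hA₂) (by
      intro p e
      rw [hdL A₁ hA₁, hdL A₂ hA₂]
      simp only [ContinuousLinearMap.comp_apply, hT, map_neg, LinearMap.neg_apply, hassoc]
      have := congrArg (fun z => -(mul e z)) (hflat p)
      simp only [map_zero, neg_zero, map_add, map_sub] at this
      rw [← this]
      abel) one
  have hgd : Differentiable ℝ g := fun p => by
    obtain ⟨g', h, _⟩ := hg p
    exact h.differentiableAt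
  have hprod : ∀ p, HasFDerivAt (fun p => L (k p) (g p)) (0 : ℝ × ℝ →L[ℝ] E) p := by
    intro p
    obtain ⟨g', h, h1, h2⟩ := hg p
    obtain ⟨k', i, i1, i2⟩ := hk p
    have i' : HasFDerivAt (fun p => L (k p)) (L.comp k') p := L.hasFDerivAt.comp p i
    have hh := i'.clm_apply h
    refine hh.congr_fderiv ?_
    have j1 : k' (1, 0) = -(mul (k p) (A₁ p)) := i1
    have j2 : k' (0, 1) = -(mul (k p) (A₂ p)) := i2
    have l1 : g' (1, 0) = mul (A₁ p) (g p) := h1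
    have l2 : g' (0, 1) = mul (A₂ p) (g p) := h2
    ext
    · simp [hL, j1, l1, hassoc]
    · simp [hL, j2, l2, hassoc]
  have hconst : ∀ p, mul (k p) (g p) = one := by
    intro p
    have := is_const_of_fderiv_eq_zero (𝕜 := ℝ) (f := fun p => L (k p) (g p))
      (fun p => (hprod p).differentiableAt) (fun p => (hprod p).fderiv) p (0, 0)
    simpa [hL, hg0, hk0, hone] using this
  refine ⟨g, k, hgd, hg0, hconst, fun p => ?_⟩
  obtain ⟨g', h, h1, h2⟩ := hg p
  rw [h.fderiv]
  exact ⟨h1, h2⟩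



/-- A flat connection on `ℝ²` integrates globally: if `A₁, A₂ : ℝ² → Mₘ(ℝ)`
are `C¹` and satisfy the zero-curvature condition
`∂A₁/∂x₂ − ∂A₂/∂x₁ + [A₁, A₂] = 0` everywhere, then there is a differentiable
`g : ℝ² → Mₘ(ℝ)` with `g(0,0) = 1`, `g(x)` invertible for all `x`, and
`∂g/∂x₁ = A₁·g`, `∂g/∂x₂ = A₂·g` everywhere. -/
theorem stmt9 (m : ℕ) (A₁ A₂ : ℝ × ℝ → Matrix (Fin m) (Fin m) ℝ)
    (hA₁ : ContDiff ℝ 1 A₁) (hA₂ : ContDiff ℝ 1 A₂)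
    (hflat : ∀ p : ℝ × ℝ,
      fderiv ℝ A₁ p (0, 1) - fderiv ℝ A₂ p (1, 0) + (A₁ p * A₂ p - A₂ p * A₁ p) = 0) :
    ∃ g : ℝ × ℝ → Matrix (Fin m) (Fin m) ℝ,
      Differentiable ℝ g ∧ g (0, 0) = 1 ∧ (∀ p : ℝ × ℝ, IsUnit (g p)) ∧
        ∀ p : ℝ × ℝ,
          fderiv ℝ g p (1, 0) = A₁ p * g p ∧ fderiv ℝ g p (0, 1) = A₂ p * g p := by
  obtain ⟨g, k, hgd, hg0, hk, hg⟩ := flat_alg (E := Matrix (Fin m) (Fin m) ℝ)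
    (LinearMap.mul ℝ (Matrix (Fin m) (Fin m) ℝ)) 1 (mul_one _) (fun a b c => mul_assoc a b c)
    A₁ A₂ hA₁ hA₂ hflat
  refine ⟨g, hgd, hg0, fun p => ?_, hg⟩
  exact (Matrix.isUnit_iff_isUnit_det _).2 (Matrix.isUnit_det_of_left_inverse (hk p))
end

section
/- Let c ∈ ℂ. There exists a function g : ℂ → ℂ that is complex differentiable at every z ≠ 0, satisfies g(z) ≠ 0 for all z ≠ 0, and solves g'(z) = (c/z)·g(z) for all z ≠ 0, if and only if c is an integer. (Equivalently: the flat ℂ*-connection (c/z) dz on ℂ ∖ {0} is the logarithmic differential dg·g⁻¹ of a globally defined nonvanishing holomorphic function precisely when c ∈ ℤ; hence the gauge orbit space H^{1|0}(ℝ² ∖ {0}; 𝔤(ℂ*)) of such flat connections is ℂ/ℤ.) -/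
/-- For `c ∈ ℂ`, there is a function `g : ℂ → ℂ`, complex differentiable
and nonvanishing away from `0`, with `g'(z) = (c/z)·g(z)` for all `z ≠ 0`, if and only
if `c` is an integer. (The flat `ℂ*`-connection `(c/z) dz` on `ℂ \ {0}` is the
logarithmic differential of a global nonvanishing holomorphic function exactly when
`c ∈ ℤ`; hence the gauge orbit space `H^{1|0}(ℝ² \ {0}; 𝔤(ℂ*))` is `ℂ/ℤ`.) -/
theorem stmt11 (c : ℂ) :
    (∃ g : ℂ → ℂ, (∀ z : ℂ, z ≠ 0 → g z ≠ 0) ∧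
        ∀ z : ℂ, z ≠ 0 → HasDerivAt g (c / z * g z) z)
      ↔ ∃ n : ℤ, c = (n : ℂ) := by
  constructor
  · rintro ⟨g, hg0, hg⟩
    have hd : ∀ w : ℂ, HasDerivAt (fun w => g (Complex.exp w) * Complex.exp (-c * w)) 0 w := by
      intro w
      have h1 := (hg (Complex.exp w) (Complex.exp_ne_zero w)).comp w (Complex.hasDerivAt_exp w)
      have h2 := ((hasDerivAt_id w).const_mul (-c)).cexp
      have h3 := h1.mul h2
      refine h3.congr_deriv ?_
      have := Complex.exp_ne_zero w
      simp only [Function.comp, id]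
      field_simp
      ring
    have hconst := is_const_of_deriv_eq_zero (fun w => (hd w).differentiableAt)
      (fun w => (hd w).deriv) 0 (2 * Real.pi * Complex.I)
    simp only [Complex.exp_zero, Complex.exp_two_pi_mul_I, mul_zero] at hconst
    have h1 := (mul_left_cancel₀ (hg0 1 one_ne_zero) hconst).symm
    obtain ⟨n, hn⟩ := Complex.exp_eq_one_iff.mp h1
    refine ⟨-n, ?_⟩
    have h4 := mul_right_cancel₀ Complex.two_pi_I_ne_zero hn
    push_cast
    rw [← h4, neg_neg]
  · rintro ⟨n, rfl⟩
    refine ⟨fun z => z ^ n, fun z hz => zpow_ne_zero n hz, fun z hz => ?_⟩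
    refine (hasDerivAt_zpow n z (Or.inl hz)).congr_deriv ?_
    rw [zpow_sub_one₀ hz]
    field_simp
end
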